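/- Let f : ℝⁿ → [0,∞) be a Borel measurable log-concave function vanishing at infinity. Then its symmetric decreasing rearrangement f* is log-concave. -/

import Mathlib

open MeasureTheory Filter Pointwise ENNReal

noncomputable section

/-- `f` is log-concave: `log f` is concave on the support of `f`. -/
def IsLogConcave {n : ℕ} (f : EuclideanSpace ℝ (Fin n) → ℝ) : Prop :=
  ConcaveOn ℝ (Function.support f) (fun x => Real.log (f x))

/-- `A*`: the open origin-centered Euclidean ball with the same volume as `A`. -/
def rearrangedSet (n : ℕ) (A : Set (EuclideanSpace ℝ (Fin n))) :
    Set (EuclideanSpace ℝ (Fin n)) :=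
  Metric.ball 0 ((volume A / volume (Metric.ball (0 : EuclideanSpace ℝ (Fin n)) 1)).toReal
    ^ (1 / (n : ℝ)))

/-- The symmetric decreasing rearrangement `f*(x) = ∫₀^∞ 1_{{f>t}*}(x) dt`. -/
def symmDecRearrangement {n : ℕ} (f : EuclideanSpace ℝ (Fin n) → ℝ)
    (x : EuclideanSpace ℝ (Fin n)) : ℝ :=
  ∫ t in Set.Ioi (0 : ℝ), (rearrangedSet n {y | t < f y}).indicator (fun _ => (1 : ℝ)) x

/-!
Log-concavity of `f` says that `{(x, u) | eᵘ < f x}` is convex, so by Brunn's theorem the radius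
`φ u` of the ball `{f > eᵘ}*` is a concave function of `u`. Therefore `{(x, u) | ‖x‖ < φ u}` is
convex as well. As `φ` is antitone and tends to `0` at infinity, `log (f* x) = sup {u | ‖x‖ < φ u}`
is the upper boundary of this convex set, hence concave.

Brunn's theorem is the Brunn–Minkowski inequality applied to slices. The latter follows by
homogeneity from its multiplicative form, the Prékopa–Leindler inequality for indicators, which is
proved by induction on the dimension; on the line, the layer cake formula reduces it to
`|A| + |B| ≤ |A + B|` for superlevel sets of functions with supremum `1`.
-/

open Set Module Topology

section OneDimensional

lemma volume_add_volume_le_volume_add_of_isCompact {K L : Set ℝ} (hK : IsCompact K)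
    (hL : IsCompact L) (hK₀ : K.Nonempty) (hL₀ : L.Nonempty) :
    volume K + volume L ≤ volume (K + L) := by
  obtain ⟨k, hkK, hk⟩ := hK.exists_isGreatest hK₀
  obtain ⟨l, hlL, hl⟩ := hL.exists_isLeast hL₀
  have hinter : volume ((l +ᵥ K) ∩ (k +ᵥ L)) = 0 := by
    refine measure_mono_null (t := {k + l}) ?_ (measure_singleton _)
    rintro _ ⟨⟨x, hx, rfl⟩, ⟨y, hy, hxy⟩⟩
    have := hk hx
    have := hl hy
    simp only [vadd_eq_add, mem_singleton_iff] at hxy ⊢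
    linarith
  calc volume K + volume L
      = volume (l +ᵥ K) + volume (k +ᵥ L) := by rw [measure_vadd, measure_vadd]
    _ = volume ((l +ᵥ K) ∪ (k +ᵥ L)) :=
        (measure_union₀ (hL.vadd k).measurableSet.nullMeasurableSet hinter).symm
    _ ≤ volume (K + L) := by
        refine measure_mono (union_subset ?_ (vadd_set_subset_add hkK))
        rw [add_comm K]
        exact vadd_set_subset_add hlL

lemma volume_add_volume_le_volume_add {A B : Set ℝ} (hA : MeasurableSet A)
    (hB : MeasurableSet B) (hA₀ : A.Nonempty) (hB₀ : B.Nonempty) :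
    volume A + volume B ≤ volume (A + B) := by
  let compacts (A : Set ℝ) : Set (Set ℝ) := {K | K ⊆ A ∧ IsCompact K ∧ K.Nonempty}
  have compacts_nonempty {A : Set ℝ} (hA₀ : A.Nonempty) : (compacts A).Nonempty :=
    hA₀.imp' singleton fun x hx ↦
      ⟨singleton_subset_iff.2 hx, isCompact_singleton, singleton_nonempty x⟩
  have volume_le {A : Set ℝ} (hA : MeasurableSet A) : volume A ≤ ⨆ K ∈ compacts A, volume K :=
    le_of_forall_lt fun r hr ↦
      have ⟨K, hKA, hK, hrK⟩ := hA.exists_lt_isCompact hr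
      lt_biSup_iff.2 ⟨K, ⟨hKA, hK, nonempty_of_measure_ne_zero hrK.ne_bot⟩, hrK⟩
  refine (add_le_add (volume_le hA) (volume_le hB)).trans <|
    ENNReal.biSup_add_biSup_le (compacts_nonempty hA₀) (compacts_nonempty hB₀) ?_
  rintro K ⟨hKA, hK, hK₀⟩ L ⟨hLB, hL, hL₀⟩
  exact (volume_add_volume_le_volume_add_of_isCompact hK hL hK₀ hL₀).trans
    (measure_mono (add_subset_add hKA hLB))

end OneDimensional

section Integration

variable {α : Type*} [MeasurableSpace α] (μ : Measure α) {F : α → ℝ≥0∞}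

lemma lintegral_eq_lintegral_Ioi_measure_lt (hF : Measurable F) (hF_top : ∀ x, F x ≠ ∞) :
    ∫⁻ x, F x ∂μ = ∫⁻ t in Ioi (0 : ℝ), μ {x | ENNReal.ofReal t < F x} :=
  calc ∫⁻ x, F x ∂μ = ∫⁻ x, ENNReal.ofReal (F x).toReal ∂μ := by
        simp only [ENNReal.ofReal_toReal (hF_top _)]
    _ = ∫⁻ t in Ioi (0 : ℝ), μ {x | t < (F x).toReal} :=
        lintegral_eq_lintegral_meas_lt μ (.of_forall fun _ ↦ toReal_nonneg)
          hF.ennreal_toReal.aemeasurable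
    _ = ∫⁻ t in Ioi (0 : ℝ), μ {x | ENNReal.ofReal t < F x} :=
        setLIntegral_congr_fun measurableSet_Ioi fun t ht ↦ by
          simp only [ENNReal.ofReal_lt_iff_lt_toReal (mem_Ioi.1 ht).le (hF_top _)]

lemma lintegral_eq_iSup_lintegral_min_natCast (hF : Measurable F) :
    ∫⁻ x, F x ∂μ = ⨆ k : ℕ, ∫⁻ x, min (F x) k ∂μ := by
  rw [← lintegral_iSup (fun k ↦ hF.min measurable_const) fun i j hij x ↦ by gcongr]
  simp only [← inf_iSup_eq, ENNReal.iSup_natCast, inf_top_eq]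

lemma measurable_measure_ofReal_lt (F : α → ℝ≥0∞) :
    Measurable fun t : ℝ ↦ μ {x | ENNReal.ofReal t < F x} :=
  Antitone.measurable fun _ _ hst ↦ measure_mono fun _ hx ↦
    (ENNReal.ofReal_le_ofReal hst).trans_lt hx

end Integration

lemma ennreal_geom_mean_le_arith_mean2_weighted {a b : ℝ} (ha : 0 < a) (hb : 0 < b)
    (hab : a + b = 1) (p q : ℝ≥0∞) :
    p ^ a * q ^ b ≤ ENNReal.ofReal a * p + ENNReal.ofReal b * q := by
  have h := ENNReal.young_inequality (p ^ a) (q ^ b) (Real.HolderConjugate.inv_inv ha hb hab)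
  rwa [ENNReal.rpow_rpow_inv ha.ne', ENNReal.rpow_rpow_inv hb.ne', ENNReal.ofReal_inv_of_pos ha,
    ENNReal.ofReal_inv_of_pos hb, div_eq_mul_inv, div_eq_mul_inv, inv_inv, inv_inv,
    mul_comm p, mul_comm q] at h

/-- The Prékopa–Leindler inequality for the measure `μ`, as a property of `μ`. Phrasing it this way
lets the inequality be transported along linear maps and products. -/
def PrekopaLeindler {E : Type*} [AddCommMonoid E] [Module ℝ E] [MeasurableSpace E]
    (μ : Measure E) : Prop :=
  ∀ ⦃a b : ℝ⦄, 0 < a → 0 < b → a + b = 1 →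
    ∀ ⦃F G H : E → ℝ≥0∞⦄, Measurable F → Measurable G → Measurable H →
      (∀ x y, F x ^ a * G y ^ b ≤ H (a • x + b • y)) →
        (∫⁻ x, F x ∂μ) ^ a * (∫⁻ x, G x ∂μ) ^ b ≤ ∫⁻ x, H x ∂μ

section PrekopaLeindlerReal

variable {a b : ℝ} {F G H : ℝ → ℝ≥0∞}

lemma smul_superlevel_add_smul_superlevel_subset {E : Type*} [Add E] [SMul ℝ E]
    {F G H : E → ℝ≥0∞} (ha : 0 < a) (hb : 0 < b) (hab : a + b = 1)
    (hFGH : ∀ x y, F x ^ a * G y ^ b ≤ H (a • x + b • y)) (t : ℝ≥0∞) :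
    a • {x | t < F x} + b • {x | t < G x} ⊆ {x | t < H x} := by
  rintro _ ⟨_, ⟨x, hx, rfl⟩, _, ⟨y, hy, rfl⟩, rfl⟩
  calc t = t ^ a * t ^ b := by
        rw [← ENNReal.rpow_add_of_nonneg _ _ ha.le hb.le, hab, ENNReal.rpow_one]
    _ < F x ^ a * G y ^ b :=
        ENNReal.mul_lt_mul (ENNReal.rpow_lt_rpow hx ha) (ENNReal.rpow_lt_rpow hy hb)
    _ ≤ H (a • x + b • y) := hFGH x y

lemma add_volume_superlevel_le_volume_superlevel_of_iSup_eq_one (ha : 0 < a) (hb : 0 < b)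
    (hab : a + b = 1) (hF : Measurable F) (hG : Measurable G)
    (hF₁ : ⨆ x, F x = 1) (hG₁ : ⨆ x, G x = 1)
    (hFGH : ∀ x y, F x ^ a * G y ^ b ≤ H (a * x + b * y)) (t : ℝ≥0∞) :
    ENNReal.ofReal a * volume {x | t < F x} + ENNReal.ofReal b * volume {x | t < G x} ≤
      volume {x | t < min (H x) 1} := by
  rcases le_or_gt 1 t with ht | ht
  · have empty {F : ℝ → ℝ≥0∞} (hF₁ : ⨆ x, F x = 1) : {x | t < F x} = ∅ :=
      eq_empty_of_forall_notMem fun x hx ↦ (hx.trans_le (hF₁ ▸ le_iSup F x)).not_ge ht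
    simp [empty hF₁, empty hG₁]
  · have nonempty {F : ℝ → ℝ≥0∞} (hF₁ : ⨆ x, F x = 1) : {x | t < F x}.Nonempty := by
      simpa only [Set.Nonempty, mem_ofPred_eq, ← lt_iSup_iff, hF₁] using ht
    have volume_smul {c : ℝ} (hc : 0 < c) (A : Set ℝ) :
        ENNReal.ofReal c * volume A = volume (c • A) := by
      simp [Measure.addHaar_smul, abs_of_pos hc]
    simp only [lt_min_iff, ht, and_true]
    rw [volume_smul ha, volume_smul hb]
    exact (volume_add_volume_le_volume_add ((hF measurableSet_Ioi).const_smul₀ a)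
      ((hG measurableSet_Ioi).const_smul₀ b) (nonempty hF₁).smul_set
      (nonempty hG₁).smul_set).trans
      (measure_mono (smul_superlevel_add_smul_superlevel_subset ha hb hab hFGH t))

lemma add_lintegral_le_lintegral_of_iSup_eq_one (ha : 0 < a) (hb : 0 < b) (hab : a + b = 1)
    (hF : Measurable F) (hG : Measurable G) (hH : Measurable H)
    (hF₁ : ⨆ x, F x = 1) (hG₁ : ⨆ x, G x = 1)
    (hFGH : ∀ x y, F x ^ a * G y ^ b ≤ H (a * x + b * y)) :
    ENNReal.ofReal a * (∫⁻ x, F x) + ENNReal.ofReal b * (∫⁻ x, G x) ≤ ∫⁻ x, H x := by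
  have ne_top {F : ℝ → ℝ≥0∞} (hF : ∀ x, F x ≤ 1) (x) : F x ≠ ∞ :=
    ne_top_of_le_ne_top one_ne_top (hF x)
  calc ENNReal.ofReal a * (∫⁻ x, F x) + ENNReal.ofReal b * (∫⁻ x, G x)
      = ∫⁻ t in Ioi (0 : ℝ), (ENNReal.ofReal a * volume {x | ENNReal.ofReal t < F x} +
          ENNReal.ofReal b * volume {x | ENNReal.ofReal t < G x}) := by
        rw [lintegral_eq_lintegral_Ioi_measure_lt _ hF (ne_top fun x ↦ hF₁ ▸ le_iSup F x),
          lintegral_eq_lintegral_Ioi_measure_lt _ hG (ne_top fun x ↦ hG₁ ▸ le_iSup G x),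
          ← lintegral_const_mul _ (measurable_measure_ofReal_lt _ F),
          ← lintegral_const_mul _ (measurable_measure_ofReal_lt _ G),
          ← lintegral_add_left ((measurable_measure_ofReal_lt _ F).const_mul _)]
    _ ≤ ∫⁻ t in Ioi (0 : ℝ), volume {x | ENNReal.ofReal t < min (H x) 1} :=
        lintegral_mono fun t ↦ add_volume_superlevel_le_volume_superlevel_of_iSup_eq_one
          ha hb hab hF hG hF₁ hG₁ hFGH _
    _ = ∫⁻ x, min (H x) 1 :=
        (lintegral_eq_lintegral_Ioi_measure_lt _ (hH.min measurable_const)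
          (ne_top fun x ↦ min_le_right _ _)).symm
    _ ≤ ∫⁻ x, H x := lintegral_mono fun x ↦ min_le_left _ _

lemma rpow_lintegral_mul_rpow_lintegral_le_of_iSup_ne_top (ha : 0 < a) (hb : 0 < b)
    (hab : a + b = 1) (hF : Measurable F) (hG : Measurable G) (hH : Measurable H)
    (hF_top : ⨆ x, F x ≠ ∞) (hG_top : ⨆ x, G x ≠ ∞)
    (hFGH : ∀ x y, F x ^ a * G y ^ b ≤ H (a * x + b * y)) :
    (∫⁻ x, F x) ^ a * (∫⁻ x, G x) ^ b ≤ ∫⁻ x, H x := by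
  by_cases hF₀ : ⨆ x, F x = 0
  · simp [iSup_eq_zero.1 hF₀, ha]
  by_cases hG₀ : ⨆ x, G x = 0
  · simp [iSup_eq_zero.1 hG₀, hb]
  set M := ⨆ x, F x
  set N := ⨆ x, G x
  have hM : M ^ a ≠ 0 ∧ M ^ a ≠ ∞ := by simp [hF₀, hF_top, ha.not_gt]
  have hN : N ^ b ≠ 0 ∧ N ^ b ≠ ∞ := by simp [hG₀, hG_top, hb.not_gt]
  set c := (M ^ a * N ^ b)⁻¹
  have hc₀ : c ≠ 0 := ENNReal.inv_ne_zero.2 (mul_ne_top hM.2 hN.2)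
  have hc_top : c ≠ ∞ := ENNReal.inv_ne_top.2 (mul_ne_zero hM.1 hN.1)
  have rpow_mul_rpow_inv (p q : ℝ≥0∞) : (M⁻¹ * p) ^ a * (N⁻¹ * q) ^ b = c * (p ^ a * q ^ b) := by
    rw [ENNReal.mul_rpow_of_nonneg _ _ ha.le, ENNReal.mul_rpow_of_nonneg _ _ hb.le,
      mul_mul_mul_comm, ENNReal.inv_rpow, ENNReal.inv_rpow,
      ← ENNReal.mul_inv (.inl hM.1) (.inl hM.2)]
  refine (ENNReal.mul_le_mul_iff_right hc₀ hc_top).1 ?_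
  calc c * ((∫⁻ x, F x) ^ a * (∫⁻ x, G x) ^ b)
      = (∫⁻ x, M⁻¹ * F x) ^ a * (∫⁻ x, N⁻¹ * G x) ^ b := by
        rw [lintegral_const_mul _ hF, lintegral_const_mul _ hG, rpow_mul_rpow_inv]
    _ ≤ ENNReal.ofReal a * (∫⁻ x, M⁻¹ * F x) + ENNReal.ofReal b * (∫⁻ x, N⁻¹ * G x) :=
        ennreal_geom_mean_le_arith_mean2_weighted ha hb hab _ _
    _ ≤ ∫⁻ x, c * H x := by
        refine add_lintegral_le_lintegral_of_iSup_eq_one ha hb hab (hF.const_mul _)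
          (hG.const_mul _) (hH.const_mul _) ?_ ?_ fun x y ↦ ?_
        · rw [← ENNReal.mul_iSup, ENNReal.inv_mul_cancel hF₀ hF_top]
        · rw [← ENNReal.mul_iSup, ENNReal.inv_mul_cancel hG₀ hG_top]
        · rw [rpow_mul_rpow_inv]
          gcongr
          exact hFGH x y
    _ = c * ∫⁻ x, H x := lintegral_const_mul _ hH

theorem prekopaLeindler_volume_real : PrekopaLeindler (volume : Measure ℝ) := by
  intro a b ha hb hab F G H hF hG hH hFGH
  have truncated (i j : ℕ) :
      (∫⁻ x, min (F x) i) ^ a * (∫⁻ x, min (G x) j) ^ b ≤ ∫⁻ x, H x := by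
    have iSup_min_ne_top (F : ℝ → ℝ≥0∞) (k : ℕ) : ⨆ x, min (F x) k ≠ ∞ :=
      ne_top_of_le_ne_top (natCast_ne_top k) (iSup_le fun x ↦ min_le_right _ _)
    refine rpow_lintegral_mul_rpow_lintegral_le_of_iSup_ne_top ha hb hab (hF.min measurable_const)
      (hG.min measurable_const) hH (iSup_min_ne_top F i) (iSup_min_ne_top G j) fun x y ↦ ?_
    refine le_trans ?_ (hFGH x y)
    gcongr <;> exact min_le_left _ _
  have iSup_rpow {c : ℝ} (hc : 0 < c) (u : ℕ → ℝ≥0∞) : (⨆ k, u k) ^ c = ⨆ k, u k ^ c :=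
    (ENNReal.orderIsoRpow c hc).map_iSup u
  rw [lintegral_eq_iSup_lintegral_min_natCast _ hF, lintegral_eq_iSup_lintegral_min_natCast _ hG,
    iSup_rpow ha, iSup_rpow hb, ENNReal.iSup_mul]
  refine iSup_le fun i ↦ ?_
  rw [ENNReal.mul_iSup]
  exact iSup_le fun j ↦ truncated i j

end PrekopaLeindlerReal

namespace PrekopaLeindler

variable {E E' : Type*} [AddCommMonoid E] [Module ℝ E] [MeasurableSpace E]
  [AddCommMonoid E'] [Module ℝ E'] [MeasurableSpace E'] {μ : Measure E} {ν : Measure E'}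

lemma of_subsingleton [Subsingleton E] [IsProbabilityMeasure μ] : PrekopaLeindler μ := by
  intro a b _ _ _ F G H _ _ _ hFGH
  have lintegral_eq (F : E → ℝ≥0∞) : ∫⁻ x, F x ∂μ = F 0 := by
    simp [Subsingleton.elim _ (0 : E)]
  simpa only [lintegral_eq, smul_zero, add_zero] using hFGH 0 0

lemma map (hμ : PrekopaLeindler μ) {L : E →ₗ[ℝ] E'} (hL : Measurable L) :
    PrekopaLeindler (μ.map L) := by
  intro a b ha hb hab F G H hF hG hH hFGH
  rw [lintegral_map hF hL, lintegral_map hG hL, lintegral_map hH hL]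
  refine hμ ha hb hab (hF.comp hL) (hG.comp hL) (hH.comp hL) fun x y ↦ ?_
  simpa only [Function.comp_apply, map_add, map_smul] using hFGH (L x) (L y)

lemma smul (hμ : PrekopaLeindler μ) (c : ℝ≥0∞) : PrekopaLeindler (c • μ) := by
  intro a b ha hb hab F G H hF hG hH hFGH
  simp only [lintegral_smul_measure, smul_eq_mul]
  calc (c * ∫⁻ x, F x ∂μ) ^ a * (c * ∫⁻ x, G x ∂μ) ^ b
      = c * ((∫⁻ x, F x ∂μ) ^ a * (∫⁻ x, G x ∂μ) ^ b) := by
        rw [ENNReal.mul_rpow_of_nonneg _ _ ha.le, ENNReal.mul_rpow_of_nonneg _ _ hb.le,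
          mul_mul_mul_comm, ← ENNReal.rpow_add_of_nonneg _ _ ha.le hb.le, hab, ENNReal.rpow_one]
    _ ≤ c * ∫⁻ x, H x ∂μ := by
        gcongr
        exact hμ ha hb hab hF hG hH hFGH

lemma prod [SFinite ν] (hμ : PrekopaLeindler μ) (hν : PrekopaLeindler ν) :
    PrekopaLeindler (μ.prod ν) := by
  intro a b ha hb hab F G H hF hG hH hFGH
  rw [lintegral_prod _ hF.aemeasurable, lintegral_prod _ hG.aemeasurable,
    lintegral_prod _ hH.aemeasurable]
  refine hμ ha hb hab hF.lintegral_prod_right' hG.lintegral_prod_right' hH.lintegral_prod_right'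
    fun x x' ↦ ?_
  exact hν ha hb hab (hF.comp measurable_prodMk_left) (hG.comp measurable_prodMk_left)
    (hH.comp measurable_prodMk_left) fun y y' ↦ hFGH (x, y) (x', y')

lemma measure_rpow_mul_measure_rpow_le (hμ : PrekopaLeindler μ) {a b : ℝ} (ha : 0 < a)
    (hb : 0 < b) (hab : a + b = 1) {A B : Set E} (hA : NullMeasurableSet A μ)
    (hB : NullMeasurableSet B μ) : μ A ^ a * μ B ^ b ≤ μ (a • A + b • B) := by
  obtain ⟨A', hA'A, hA', hA'_ae⟩ := hA.exists_measurable_subset_ae_eq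
  obtain ⟨B', hB'B, hB', hB'_ae⟩ := hB.exists_measurable_subset_ae_eq
  have hC := measurableSet_toMeasurable μ (a • A + b • B)
  rw [← measure_congr hA'_ae, ← measure_congr hB'_ae, ← measure_toMeasurable (a • A + b • B),
    ← lintegral_indicator_one hA', ← lintegral_indicator_one hB', ← lintegral_indicator_one hC]
  refine hμ ha hb hab (measurable_one.indicator hA') (measurable_one.indicator hB')
    (measurable_one.indicator hC) fun x y ↦ ?_
  by_cases hx : x ∈ A'
  · by_cases hy : y ∈ B'
    · have hxy : a • x + b • y ∈ toMeasurable μ (a • A + b • B) :=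
        subset_toMeasurable _ _ (add_mem_add (smul_mem_smul_set (hA'A hx))
          (smul_mem_smul_set (hB'B hy)))
      simp [hx, hy, hxy]
    · simp [hy, hb]
  · simp [hx, ha]

end PrekopaLeindler

theorem prekopaLeindler_volume_pi (n : ℕ) :
    PrekopaLeindler (volume : Measure (Fin n → ℝ)) := by
  induction n with
  | zero =>
    rw [volume_pi, Measure.pi_of_empty _ 0]
    exact .of_subsingleton
  | succ n ih =>
    let cons := Fin.consLinearEquiv ℝ fun _ : Fin (n + 1) ↦ ℝ
    have cons_volume : MeasurePreserving cons volume volume := by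
      have cons_eq : ⇑cons = (MeasurableEquiv.piFinSuccAbove (fun _ : Fin (n + 1) ↦ ℝ) 0).symm := by
        ext x i
        simp [cons, MeasurableEquiv.piFinSuccAbove]
      rw [cons_eq]
      exact (volume_preserving_piFinSuccAbove _ 0).symm
    rw [← cons_volume.map_eq]
    exact (prekopaLeindler_volume_real.prod ih).map (L := cons.toLinearMap) cons_volume.measurable

section BrunnMinkowski

variable {E : Type*} [NormedAddCommGroup E] [NormedSpace ℝ E] [FiniteDimensional ℝ E]
  [MeasurableSpace E] [BorelSpace E] (μ : Measure E) [μ.IsAddHaarMeasure]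

theorem prekopaLeindler_addHaar : PrekopaLeindler μ := by
  let e := (finBasis ℝ E).equivFunL.symm
  rw [μ.isAddLeftInvariant_eq_smul (volume.map e)]
  exact ((prekopaLeindler_volume_pi _).map (L := e.toLinearMap) e.continuous.measurable).smul _

variable {μ} {a b : ℝ} {A B : Set E}

lemma measure_smul_rpow_inv_finrank [Nontrivial E] (ha : 0 ≤ a) (A : Set E) :
    μ (a • A) ^ (finrank ℝ E : ℝ)⁻¹ = ENNReal.ofReal a * μ A ^ (finrank ℝ E : ℝ)⁻¹ := by
  rw [Measure.addHaar_smul, abs_of_nonneg (by positivity), ENNReal.ofReal_pow ha,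
    ENNReal.mul_rpow_of_nonneg _ _ (by positivity), ← ENNReal.rpow_natCast,
    ENNReal.rpow_rpow_inv (Nat.cast_ne_zero.2 finrank_pos.ne')]

lemma measure_rpow_inv_finrank_add_le_of_ne_zero [Nontrivial E]
    (hA : NullMeasurableSet A μ) (hB : NullMeasurableSet B μ) (hA₀ : μ A ≠ 0) (hB₀ : μ B ≠ 0)
    (hA_top : μ A ≠ ∞) (hB_top : μ B ≠ ∞) :
    μ A ^ (finrank ℝ E : ℝ)⁻¹ + μ B ^ (finrank ℝ E : ℝ)⁻¹ ≤ μ (A + B) ^ (finrank ℝ E : ℝ)⁻¹ := by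
  set d := (finrank ℝ E : ℝ)⁻¹
  have hd : 0 < d := inv_pos.2 (Nat.cast_pos.2 finrank_pos)
  obtain ⟨p, hp, hpA⟩ : ∃ p : ℝ, 0 < p ∧ μ A ^ d = ENNReal.ofReal p :=
    have hA_top' := ENNReal.rpow_ne_top_of_nonneg hd.le hA_top
    ⟨_, toReal_pos (by simp [hA₀, hA_top]) hA_top', (ofReal_toReal hA_top').symm⟩
  obtain ⟨q, hq, hqB⟩ : ∃ q : ℝ, 0 < q ∧ μ B ^ d = ENNReal.ofReal q :=
    have hB_top' := ENNReal.rpow_ne_top_of_nonneg hd.le hB_top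
    ⟨_, toReal_pos (by simp [hB₀, hB_top]) hB_top', (ofReal_toReal hB_top').symm⟩
  -- Rescale `A` and `B` to measure `1`; with these weights the sum is again a multiple of `A + B`.
  have measure_inv_smul {r : ℝ} (hr : 0 < r) {A : Set E} (hrA : μ A ^ d = ENNReal.ofReal r) :
      μ (r⁻¹ • A) = 1 := by
    refine ENNReal.rpow_left_injective hd.ne' ?_
    simp only [ENNReal.one_rpow]
    rw [measure_smul_rpow_inv_finrank (inv_pos.2 hr).le, hrA, ← ENNReal.ofReal_mul (by positivity),
      inv_mul_cancel₀ hr.ne', ENNReal.ofReal_one]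
  have smul_add_smul : (p / (p + q)) • p⁻¹ • A + (q / (p + q)) • q⁻¹ • B = (p + q)⁻¹ • (A + B) := by
    rw [smul_smul, smul_smul, smul_add]
    congr 2 <;> field_simp
  have one_le : 1 ≤ μ ((p + q)⁻¹ • (A + B)) := by
    have h := (prekopaLeindler_addHaar μ).measure_rpow_mul_measure_rpow_le
      (a := p / (p + q)) (b := q / (p + q)) (by positivity) (by positivity) (by field_simp)
      (Measure.NullMeasurableSet.const_smul hA p⁻¹) (Measure.NullMeasurableSet.const_smul hB q⁻¹)
    simpa only [measure_inv_smul hp hpA, measure_inv_smul hq hqB, smul_add_smul,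
      ENNReal.one_rpow, one_mul] using h
  calc μ A ^ d + μ B ^ d = ENNReal.ofReal (p + q) * 1 := by
        rw [hpA, hqB, ENNReal.ofReal_add hp.le hq.le, mul_one]
    _ ≤ ENNReal.ofReal (p + q) * μ ((p + q)⁻¹ • (A + B)) ^ d := by
        gcongr
        exact ENNReal.one_le_rpow one_le hd
    _ = μ (A + B) ^ d := by
        rw [← measure_smul_rpow_inv_finrank (by positivity), smul_inv_smul₀ (by positivity)]

theorem measure_rpow_inv_finrank_add_le [Nontrivial E]
    (hA : NullMeasurableSet A μ) (hB : NullMeasurableSet B μ) (hA₀ : A.Nonempty)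
    (hB₀ : B.Nonempty) :
    μ A ^ (finrank ℝ E : ℝ)⁻¹ + μ B ^ (finrank ℝ E : ℝ)⁻¹ ≤ μ (A + B) ^ (finrank ℝ E : ℝ)⁻¹ := by
  have hd : 0 < (finrank ℝ E : ℝ)⁻¹ := inv_pos.2 (Nat.cast_pos.2 finrank_pos)
  have measure_left_le : μ A ≤ μ (A + B) := by
    obtain ⟨y, hy⟩ := hB₀
    rw [← measure_vadd μ y A, add_comm A]
    exact measure_mono (vadd_set_subset_add hy)
  have measure_right_le : μ B ≤ μ (A + B) := by
    obtain ⟨x, hx⟩ := hA₀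
    rw [← measure_vadd μ x B]
    exact measure_mono (vadd_set_subset_add hx)
  by_cases hAB_top : μ (A + B) = ∞
  · simp [hAB_top, hd]
  by_cases hA_null : μ A = 0
  · simpa [hA_null, hd] using ENNReal.rpow_le_rpow measure_right_le hd.le
  by_cases hB_null : μ B = 0
  · simpa [hB_null, hd] using ENNReal.rpow_le_rpow measure_left_le hd.le
  exact measure_rpow_inv_finrank_add_le_of_ne_zero hA hB hA_null hB_null
    (ne_top_of_le_ne_top hAB_top measure_left_le) (ne_top_of_le_ne_top hAB_top measure_right_le)

lemma mul_measureReal_rpow_inv_finrank_add_le [Nontrivial E] (ha : 0 ≤ a) (hb : 0 ≤ b)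
    (hA : NullMeasurableSet A μ) (hB : NullMeasurableSet B μ) (hA₀ : A.Nonempty)
    (hB₀ : B.Nonempty) (hAB_top : μ (a • A + b • B) ≠ ∞) :
    a * μ.real A ^ (finrank ℝ E : ℝ)⁻¹ + b * μ.real B ^ (finrank ℝ E : ℝ)⁻¹ ≤
      μ.real (a • A + b • B) ^ (finrank ℝ E : ℝ)⁻¹ := by
  set d := (finrank ℝ E : ℝ)⁻¹
  have hd : 0 ≤ d := by positivity
  have toReal_measure_smul {c : ℝ} (hc : 0 ≤ c) (A : Set E) :
      (μ (c • A) ^ d).toReal = c * μ.real A ^ d := by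
    rw [measure_smul_rpow_inv_finrank hc, toReal_mul, toReal_ofReal hc, ← ENNReal.toReal_rpow,
      measureReal_def]
  have h := measure_rpow_inv_finrank_add_le (Measure.NullMeasurableSet.const_smul hA a)
    (Measure.NullMeasurableSet.const_smul hB b) hA₀.smul_set hB₀.smul_set
  have htop : μ (a • A + b • B) ^ d ≠ ∞ := ENNReal.rpow_ne_top_of_nonneg hd hAB_top
  calc a * μ.real A ^ d + b * μ.real B ^ d
      = (μ (a • A) ^ d + μ (b • B) ^ d).toReal := by
        rw [ENNReal.toReal_add (ne_top_of_le_ne_top htop (le_self_add.trans h))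
          (ne_top_of_le_ne_top htop (le_add_self.trans h)), toReal_measure_smul ha,
          toReal_measure_smul hb]
    _ ≤ (μ (a • A + b • B) ^ d).toReal := ENNReal.toReal_mono htop h
    _ = μ.real (a • A + b • B) ^ d := by rw [← ENNReal.toReal_rpow, measureReal_def]

end BrunnMinkowski

section Slices

variable {E F : Type*}

theorem concaveOn_measureReal_slice_rpow_inv_finrank [NormedAddCommGroup E] [NormedSpace ℝ E]
    [FiniteDimensional ℝ E] [Nontrivial E] [MeasurableSpace E] [BorelSpace E] {μ : Measure E}
    [μ.IsAddHaarMeasure] [AddCommGroup F] [Module ℝ F] {C : Set (E × F)} (hC : Convex ℝ C)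
    (hC_fin : ∀ u, μ {x | (x, u) ∈ C} ≠ ∞) :
    ConcaveOn ℝ (Prod.snd '' C) fun u ↦ μ.real {x | (x, u) ∈ C} ^ (finrank ℝ E : ℝ)⁻¹ := by
  refine concaveOn_iff_forall_pos.2 ⟨hC.linear_image (.snd ℝ E F), ?_⟩
  rintro _ ⟨⟨x, u⟩, hx, rfl⟩ _ ⟨⟨y, v⟩, hy, rfl⟩ a b ha hb hab
  let slice (u : F) : Set E := {x | (x, u) ∈ C}
  have nullMeasurableSet_slice (u : F) : NullMeasurableSet (slice u) μ :=
    Convex.nullMeasurableSet μ fun x hx y hy a b ha hb hab ↦ by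
      simpa [← add_smul, hab, slice] using hC hx hy ha hb hab
  have slice_add_subset : a • slice u + b • slice v ⊆ slice (a • u + b • v) := by
    rintro _ ⟨_, ⟨x, hx, rfl⟩, _, ⟨y, hy, rfl⟩, rfl⟩
    exact hC hx hy ha.le hb.le hab
  calc a • μ.real (slice u) ^ (finrank ℝ E : ℝ)⁻¹ + b • μ.real (slice v) ^ (finrank ℝ E : ℝ)⁻¹
      ≤ μ.real (a • slice u + b • slice v) ^ (finrank ℝ E : ℝ)⁻¹ :=
        mul_measureReal_rpow_inv_finrank_add_le ha.le hb.le (nullMeasurableSet_slice u)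
          (nullMeasurableSet_slice v) ⟨x, hx⟩ ⟨y, hy⟩
          (measure_ne_top_of_subset slice_add_subset (hC_fin _))
    _ ≤ μ.real (slice (a • u + b • v)) ^ (finrank ℝ E : ℝ)⁻¹ := by
        gcongr
        exact hC_fin _

lemma concaveOn_sSup_slice [AddCommGroup E] [Module ℝ E] {C : Set (E × ℝ)} (hC : Convex ℝ C)
    (hC_bdd : ∀ x, BddAbove {u | (x, u) ∈ C}) :
    ConcaveOn ℝ (Prod.fst '' C) fun x ↦ sSup {u | (x, u) ∈ C} := by
  refine ⟨hC.linear_image (.fst ℝ E ℝ), ?_⟩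
  rintro _ ⟨⟨x, u⟩, hu, rfl⟩ _ ⟨⟨y, v⟩, hv, rfl⟩ a b ha hb hab
  let slice (x : E) : Set ℝ := {u | (x, u) ∈ C}
  have hx : (slice x).Nonempty := ⟨u, hu⟩
  have hy : (slice y).Nonempty := ⟨v, hv⟩
  calc a • sSup (slice x) + b • sSup (slice y)
      = sSup (a • slice x + b • slice y) := by
        rw [csSup_add hx.smul_set ((hC_bdd x).smul_of_nonneg ha) hy.smul_set
          ((hC_bdd y).smul_of_nonneg hb), Real.sSup_smul_of_nonneg ha, Real.sSup_smul_of_nonneg hb]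
    _ ≤ sSup (slice (a • x + b • y)) := by
        refine csSup_le_csSup (hC_bdd _) (hx.smul_set.add hy.smul_set) ?_
        rintro _ ⟨_, ⟨u, hu, rfl⟩, _, ⟨v, hv, rfl⟩, rfl⟩
        exact hC hu hv ha hb hab

end Slices

section RealLine

lemma bddAbove_setOf_pos_of_concaveOn_of_tendsto_zero {s : Set ℝ} {g : ℝ → ℝ}
    (hg : ConcaveOn ℝ s g) (hlim : Tendsto g atTop (𝓝 0)) : BddAbove {x ∈ s | 0 < g x} := by
  by_contra hunbdd
  have exists_gt := not_bddAbove_iff.1 hunbdd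
  obtain ⟨x, ⟨hxs, hx⟩, -⟩ := exists_gt 0
  obtain ⟨m, hm⟩ := eventually_atTop.1 (hlim.eventually_lt_const hx)
  obtain ⟨y, ⟨-, hy⟩, hmy⟩ := exists_gt (max m x)
  obtain ⟨hmy, hxy⟩ := max_lt_iff.1 hmy
  set c := (g x - g y) / (y - x)
  have hc : 0 < c := div_pos (sub_pos.2 (hm y hmy.le)) (sub_pos.2 hxy)
  -- The secant through `x` and `y` vanishes at `y + g y / c`.
  obtain ⟨z, ⟨hzs, hz⟩, hyz⟩ := exists_gt (y + g y / c)
  have hyz' : y < z := (lt_add_of_pos_right y (div_pos hy hc)).trans hyz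
  have hslope : (g z - g y) / (z - y) ≤ -c := by
    rw [← neg_div, neg_sub]
    exact hg.slope_anti_adjacent hxs hzs hxy hyz'
  rw [div_le_iff₀ (sub_pos.2 hyz')] at hslope
  rw [← lt_sub_iff_add_lt', div_lt_iff₀ hc] at hyz
  linarith

lemma volume_real_exp_image {U : Set ℝ} (hU : IsLowerSet U) (hU₀ : U.Nonempty)
    (hU_bdd : BddAbove U) : volume.real (Real.exp '' U) = Real.exp (sSup U) := by
  have Iio_subset : Iio (sSup U) ⊆ U := fun u hu ↦
    have ⟨v, hv, huv⟩ := exists_lt_of_lt_csSup hU₀ hu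
    hU huv.le hv
  have subset_Iic : U ⊆ Iic (sSup U) := fun u hu ↦ le_csSup hU_bdd hu
  have volume_eq : volume (Real.exp '' U) = ENNReal.ofReal (Real.exp (sSup U)) := by
    refine le_antisymm ((measure_mono (image_mono subset_Iic)).trans_eq ?_)
      (Eq.trans_le ?_ (measure_mono (image_mono Iio_subset)))
    · rw [Real.image_exp_Iic, Real.volume_Ioc, sub_zero]
    · rw [Real.image_exp_Iio, Real.volume_Ioo, sub_zero]
  rw [measureReal_def, volume_eq, toReal_ofReal (Real.exp_pos _).le]

end RealLine

section Rearrangement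

variable {n : ℕ} {f : EuclideanSpace ℝ (Fin n) → ℝ}

/-- The radius of the ball `{f > eᵘ}*`. Levels are parametrized on a logarithmic scale, because
log-concavity of `f` is convexity of `{(x, u) | eᵘ < f x}`. -/
def layerRadius (f : EuclideanSpace ℝ (Fin n) → ℝ) (u : ℝ) : ℝ :=
  (volume {x | Real.exp u < f x} /
    volume (Metric.ball (0 : EuclideanSpace ℝ (Fin n)) 1)).toReal ^ (1 / (n : ℝ))

lemma rearrangedSet_setOf_exp_lt (f : EuclideanSpace ℝ (Fin n) → ℝ) (u : ℝ) :
    rearrangedSet n {x | Real.exp u < f x} = Metric.ball 0 (layerRadius f u) :=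
  rfl

lemma layerRadius_eq_mul (f : EuclideanSpace ℝ (Fin n) → ℝ) (u : ℝ) :
    layerRadius f u =
      (volume.real (Metric.ball (0 : EuclideanSpace ℝ (Fin n)) 1) ^ (n : ℝ)⁻¹)⁻¹ *
        volume.real {x | Real.exp u < f x} ^ (n : ℝ)⁻¹ := by
  rw [layerRadius, toReal_div, Real.div_rpow toReal_nonneg toReal_nonneg, one_div, measureReal_def,
    measureReal_def, div_eq_inv_mul]

lemma layerRadius_antitone (hfin : ∀ u, volume {x | Real.exp u < f x} ≠ ∞) :
    Antitone (layerRadius f) := by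
  intro u v huv
  rw [layerRadius_eq_mul, layerRadius_eq_mul]
  gcongr
  exact hfin u

lemma tendsto_layerRadius_atTop [NeZero n] (hnull : ∀ u, NullMeasurableSet {x | Real.exp u < f x})
    (hfin : ∀ u, volume {x | Real.exp u < f x} ≠ ∞) :
    Tendsto (layerRadius f) atTop (𝓝 0) := by
  have hvol : Tendsto (fun u ↦ volume {x | Real.exp u < f x}) atTop (𝓝 0) := by
    have iInter_eq_empty : ⋂ u, {x | Real.exp u < f x} = ∅ := by
      refine eq_empty_of_forall_notMem fun x hx ↦ ?_
      obtain ⟨u, hu⟩ := (Real.tendsto_exp_atTop.eventually_ge_atTop (f x)).exists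
      exact (mem_iInter.1 hx u).not_ge hu
    rw [← measure_empty (μ := (volume : Measure (EuclideanSpace ℝ (Fin n)))), ← iInter_eq_empty]
    exact tendsto_measure_iInter_atTop hnull
      (fun u v huv x hx ↦ (Real.exp_le_exp.2 huv).trans_lt hx) ⟨0, hfin 0⟩
  have hd : 0 < (n : ℝ)⁻¹ := inv_pos.2 (Nat.cast_pos.2 (NeZero.pos n))
  have h := (((ENNReal.tendsto_toReal zero_ne_top).comp hvol).rpow_const
    (p := (n : ℝ)⁻¹) (.inr hd.le)).const_mul
      (volume.real (Metric.ball (0 : EuclideanSpace ℝ (Fin n)) 1) ^ (n : ℝ)⁻¹)⁻¹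
  rw [toReal_zero, Real.zero_rpow hd.ne', mul_zero] at h
  exact h.congr fun u ↦ (layerRadius_eq_mul f u).symm

lemma exists_exp_lt_of_layerRadius_pos [NeZero n] {u : ℝ} (hu : 0 < layerRadius f u) :
    ∃ x, Real.exp u < f x := by
  contrapose! hu
  simp [layerRadius, (hu _).not_gt, NeZero.ne n]

lemma isLowerSet_setOf_norm_lt_layerRadius (hfin : ∀ u, volume {x | Real.exp u < f x} ≠ ∞)
    (x : EuclideanSpace ℝ (Fin n)) : IsLowerSet {u | ‖x‖ < layerRadius f u} :=
  fun _ _ hvu hu ↦ lt_of_lt_of_le hu (layerRadius_antitone hfin hvu)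

lemma symmDecRearrangement_eq_volume_real_exp_image
    (hfin : ∀ u, volume {x | Real.exp u < f x} ≠ ∞) (x : EuclideanSpace ℝ (Fin n)) :
    symmDecRearrangement f x = volume.real (Real.exp '' {u | ‖x‖ < layerRadius f u}) := by
  set U := {u | ‖x‖ < layerRadius f u}
  have hU : IsLowerSet U := isLowerSet_setOf_norm_lt_layerRadius hfin x
  have measurable_image : MeasurableSet (Real.exp '' U) :=
    hU.ordConnected.measurableSet.image_of_continuousOn_injOn
      Real.continuous_exp.continuousOn Real.exp_injective.injOn
  have image_subset : Real.exp '' U ⊆ Ioi 0 := by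
    rintro _ ⟨u, -, rfl⟩
    exact Real.exp_pos u
  have indicator_eq {t : ℝ} (ht : 0 < t) :
      (rearrangedSet n {y | t < f y}).indicator (fun _ ↦ (1 : ℝ)) x =
        (Real.exp '' U).indicator 1 t := by
    obtain ⟨u, rfl⟩ : ∃ u, Real.exp u = t := ⟨_, Real.exp_log ht⟩
    have mem_iff : x ∈ rearrangedSet n {y | Real.exp u < f y} ↔ Real.exp u ∈ Real.exp '' U := by
      rw [Real.exp_injective.mem_set_image, rearrangedSet_setOf_exp_lt, mem_ball_zero_iff,
        mem_ofPred_eq]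
    by_cases h : x ∈ rearrangedSet n {y | Real.exp u < f y}
    · rw [indicator_of_mem h, indicator_of_mem (mem_iff.1 h), Pi.one_apply]
    · rw [indicator_of_notMem h, indicator_of_notMem (h ∘ mem_iff.2)]
  calc symmDecRearrangement f x = ∫ t in Ioi (0 : ℝ), (Real.exp '' U).indicator 1 t :=
        setIntegral_congr_fun measurableSet_Ioi fun t ht ↦ indicator_eq ht
    _ = volume.real (Real.exp '' U) := by
        rw [integral_indicator_one measurable_image, measureReal_restrict_apply measurable_image,
          inter_eq_left.2 image_subset]

namespace IsLogConcave

lemma convex_setOf_exp_lt (hf : IsLogConcave f) (hf₀ : ∀ x, 0 ≤ f x) :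
    Convex ℝ {p : EuclideanSpace ℝ (Fin n) × ℝ | Real.exp p.2 < f p.1} := by
  convert hf.convex_strict_hypograph using 1
  ext ⟨x, u⟩
  rcases (hf₀ x).eq_or_lt with hx | hx
  · simp [← hx, (Real.exp_pos u).le]
  · simp [hx.ne', Real.lt_log_iff_exp_lt hx]

lemma nullMeasurableSet_setOf_exp_lt (hf : IsLogConcave f) (hf₀ : ∀ x, 0 ≤ f x) (u : ℝ) :
    NullMeasurableSet {x | Real.exp u < f x} := by
  refine Convex.nullMeasurableSet _ fun x hx y hy a b ha hb hab ↦ ?_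
  have := hf.convex_setOf_exp_lt hf₀ (x := (x, u)) hx (y := (y, u)) hy ha hb hab
  simpa [← add_mul, hab] using this

variable [NeZero n] (hf : IsLogConcave f) (hf₀ : ∀ x, 0 ≤ f x)
  (hfin : ∀ u, volume {x | Real.exp u < f x} ≠ ∞)
include hf hf₀ hfin

lemma concaveOn_layerRadius : ConcaveOn ℝ {u | ∃ x, Real.exp u < f x} (layerRadius f) := by
  have h := concaveOn_measureReal_slice_rpow_inv_finrank (hf.convex_setOf_exp_lt hf₀) hfin
  have image_snd : Prod.snd '' {p : EuclideanSpace ℝ (Fin n) × ℝ | Real.exp p.2 < f p.1} =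
      {u | ∃ x, Real.exp u < f x} := by
    ext u
    simp
  rw [finrank_euclideanSpace_fin, image_snd] at h
  rw [funext (layerRadius_eq_mul f)]
  exact h.smul (by positivity)

lemma bddAbove_setOf_layerRadius_pos : BddAbove {u | 0 < layerRadius f u} := by
  refine (bddAbove_setOf_pos_of_concaveOn_of_tendsto_zero (hf.concaveOn_layerRadius hf₀ hfin)
    (tendsto_layerRadius_atTop (hf.nullMeasurableSet_setOf_exp_lt hf₀) hfin)).mono fun u hu ↦ ?_
  exact ⟨exists_exp_lt_of_layerRadius_pos hu, hu⟩

lemma convex_setOf_norm_lt_layerRadius :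
    Convex ℝ {p : EuclideanSpace ℝ (Fin n) × ℝ | ‖p.1‖ < layerRadius f p.2} := by
  refine convex_iff_forall_pos.2 fun ⟨x, u⟩ hx ⟨y, v⟩ hy a b ha hb hab ↦ ?_
  simp only [mem_ofPred_eq] at hx hy
  have mem_domain {x : EuclideanSpace ℝ (Fin n)} {u : ℝ} (hx : ‖x‖ < layerRadius f u) :
      ∃ y, Real.exp u < f y :=
    exists_exp_lt_of_layerRadius_pos ((norm_nonneg x).trans_lt hx)
  calc ‖a • x + b • y‖ ≤ a • ‖x‖ + b • ‖y‖ :=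
        convexOn_univ_norm.2 trivial trivial ha.le hb.le hab
    _ < a • layerRadius f u + b • layerRadius f v := by gcongr
    _ ≤ layerRadius f (a • u + b • v) :=
        (hf.concaveOn_layerRadius hf₀ hfin).2 (mem_domain hx) (mem_domain hy) ha.le hb.le hab

lemma bddAbove_setOf_norm_lt_layerRadius (x : EuclideanSpace ℝ (Fin n)) :
    BddAbove {u | ‖x‖ < layerRadius f u} :=
  (hf.bddAbove_setOf_layerRadius_pos hf₀ hfin).mono fun _ ↦ (norm_nonneg x).trans_lt

lemma symmDecRearrangement_eq_exp_sSup {x : EuclideanSpace ℝ (Fin n)}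
    (hx : {u | ‖x‖ < layerRadius f u}.Nonempty) :
    symmDecRearrangement f x = Real.exp (sSup {u | ‖x‖ < layerRadius f u}) := by
  rw [symmDecRearrangement_eq_volume_real_exp_image hfin,
    volume_real_exp_image (isLowerSet_setOf_norm_lt_layerRadius hfin x) hx
      (hf.bddAbove_setOf_norm_lt_layerRadius hf₀ hfin x)]

lemma support_symmDecRearrangement :
    Function.support (symmDecRearrangement f) =
      Prod.fst '' {p : EuclideanSpace ℝ (Fin n) × ℝ | ‖p.1‖ < layerRadius f p.2} := by
  ext x
  rcases {u | ‖x‖ < layerRadius f u}.eq_empty_or_nonempty with hx | hx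
  · have hfx : symmDecRearrangement f x = 0 := by
      rw [symmDecRearrangement_eq_volume_real_exp_image hfin, hx, image_empty, measureReal_empty]
    simpa [hfx] using eq_empty_iff_forall_notMem.1 hx
  · simpa [hf.symmDecRearrangement_eq_exp_sSup hf₀ hfin hx, Set.Nonempty] using hx

lemma isLogConcave_symmDecRearrangement : IsLogConcave (symmDecRearrangement f) := by
  rw [IsLogConcave, hf.support_symmDecRearrangement hf₀ hfin]
  refine (concaveOn_sSup_slice (hf.convex_setOf_norm_lt_layerRadius hf₀ hfin)
    (hf.bddAbove_setOf_norm_lt_layerRadius hf₀ hfin)).congr ?_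
  rintro _ ⟨⟨x, u⟩, hu, rfl⟩
  simp only [hf.symmDecRearrangement_eq_exp_sSup hf₀ hfin ⟨u, hu⟩, Real.log_exp, mem_ofPred_eq]

end IsLogConcave

-- `r ^ (1 / 0) = 1` makes every `{f > t}*` the whole space, and the integral of `1` over `(0, ∞)`
-- has the junk value `0`.
lemma symmDecRearrangement_of_dimension_zero (f : EuclideanSpace ℝ (Fin 0) → ℝ) :
    symmDecRearrangement f = 0 := by
  ext x
  simp [symmDecRearrangement, rearrangedSet, Subsingleton.elim x 0, measureReal_def]

end Rearrangement

theorem stmt11_general (n : ℕ) (f : EuclideanSpace ℝ (Fin n) → ℝ) (hf0 : ∀ x, 0 ≤ f x)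
    (hvan : ∀ t : ℝ, 0 < t → volume {x | t < f x} < ⊤) (hf : IsLogConcave f) :
    IsLogConcave (symmDecRearrangement f) := by
  obtain rfl | hn := eq_or_ne n 0
  · simpa [IsLogConcave, symmDecRearrangement_of_dimension_zero]
      using concaveOn_const 0 convex_empty
  · have : NeZero n := ⟨hn⟩
    exact hf.isLogConcave_symmDecRearrangement hf0 fun u ↦ (hvan _ (Real.exp_pos u)).ne

/-- The symmetric decreasing rearrangement of a log-concave function vanishing at
infinity is log-concave. -/
theorem stmt11 (n : ℕ) (f : EuclideanSpace ℝ (Fin n) → ℝ)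
    (hmeas : Measurable f) (hf0 : ∀ x, 0 ≤ f x)
    (hvan : ∀ t : ℝ, 0 < t → volume {x | t < f x} < ⊤)
    (hf : IsLogConcave f) :
    IsLogConcave (symmDecRearrangement f) :=
  stmt11_general n f hf0 hvan hf

end
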